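/- arXiv:2002.09363 — 2 statements merged into one kernel-verified Lean document; each statement's English description precedes it below -/
import Mathlib

section
/- Invariance of the ε-ball under T (Proposition 2.8, part 1): Set γ := ‖Q‖_{(d+1)/2,ℤ^k} and δ := ‖Q‖_{d+1,ℤ^k∖{0}}, assumed finite. If ε > 0 satisfies δ + γ ε^d ≤ ε, then T maps B_ε(0) ∩ D into itself, where B_ε(0) is the closed ball of radius ε around 0 in ℓ^{d+1}(ℤ^k∖{0}); that is, for every x ∈ D with ‖x‖_{d+1,ℤ^k∖{0}} ≤ ε one has T(x) ∈ D and ‖T(x)‖_{d+1,ℤ^k∖{0}} ≤ ε. -/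
/-!
Since the denominator of `T` is at least `1`, pointwise `0 ≤ T(x) ≤ Q + Q * x^d`, where `*` is
convolution. By Minkowski's inequality in `ℓ^{d+1}`, the norm of `T(x)` is at most
`δ + ‖Q * x^d‖_{d+1}`, and the discrete Young inequality with exponents `(d+1)/2` for `Q` and
`(d+1)/d` for `x^d` bounds the last term by `γ ‖x‖_{d+1}^d ≤ γ ε^d` (`young_tsum`).

Everything is computed in `ℝ≥0∞`, where sums need no summability side conditions; the lemmas
`ofReal_lpNorm` and `summable_and_lpNorm_le` translate from and to real `ℓ^p` norms.
-/

open scoped BigOperators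
open Filter Topology

noncomputable section

/-- The integer lattice `ℤ^k`. -/
abbrev ZkL (k : ℕ) := Fin k → ℤ

/-- The punctured integer lattice `ℤ^k ∖ {0}`, as a subtype. -/
abbrev ZkP (k : ℕ) := {j : ZkL k // j ≠ 0}

/-- The `p`-norm `‖x‖_{p, ℤ^k}` of a function on all of `ℤ^k`. -/
noncomputable def normFull (k : ℕ) (p : ℝ) (x : ZkL k → ℝ) : ℝ :=
  (∑' j : ZkL k, |x j| ^ p) ^ (1 / p)

/-- The `p`-norm `‖x‖_{p, ℤ^k ∖ {0}}` of a function on `ℤ^k`, restricted to nonzero sites. -/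
noncomputable def normPunct (k : ℕ) (p : ℝ) (x : ZkL k → ℝ) : ℝ :=
  (∑' j : ZkP k, |x j.1| ^ p) ^ (1 / p)

/-- The `p`-norm of a function defined on `ℤ^k ∖ {0}`. -/
noncomputable def norm0 (k : ℕ) (p : ℝ) (x : ZkP k → ℝ) : ℝ :=
  (∑' j : ZkP k, |x j| ^ p) ^ (1 / p)

/-- `γ := ‖Q‖_{(d+1)/2, ℤ^k}`. -/
noncomputable def gam (k d : ℕ) (Q : ZkL k → ℝ) : ℝ := normFull k (((d : ℝ) + 1) / 2) Q

/-- `δ := ‖Q‖_{d+1, ℤ^k ∖ {0}}`. -/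
noncomputable def del (k d : ℕ) (Q : ZkL k → ℝ) : ℝ := normPunct k ((d : ℝ) + 1) Q

/-- Membership in `D`: an element of `ℓ^{d+1}(ℤ^k ∖ {0})` with nonnegative entries. -/
def memD (k d : ℕ) (x : ZkP k → ℝ) : Prop :=
  Summable (fun j : ZkP k => |x j| ^ ((d : ℝ) + 1)) ∧ ∀ j : ZkP k, 0 ≤ x j

/-- The operator `T`:
`T(x)(i) = (Q(i) + Σ_{j≠0} Q(i−j) x(j)^d) / (1 + Σ_{j≠0} Q(j) x(j)^d)`. -/
noncomputable def opT (k d : ℕ) (Q : ZkL k → ℝ) (x : ZkP k → ℝ) (i : ZkL k) : ℝ :=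
  (Q i + ∑' j : ZkP k, Q (i - j.1) * x j ^ d) /
  (1 + ∑' j : ZkP k, Q j.1 * x j ^ d)

/-- The good set `G_d`. -/
def goodSet (d : ℕ) : Set (ℝ × ℝ) :=
  {gd | 1 < gd.1 ∧ 0 < gd.2 ∧ ∃ ε > 0,
    gd.2 + gd.1 * ε ^ d ≤ ε ∧
    2 * d * gd.1 * ε ^ (d - 1) + 2 * d * gd.2 * ε ^ d < 1}

/-- Minkowski's inequality for `ℝ≥0∞`-valued sums. -/
lemma minkowski_tsum {ι : Type*} (f g : ι → ENNReal) {p : ℝ} (hp : 1 ≤ p) :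
    (∑' i, (f i + g i) ^ p) ^ (1 / p) ≤ (∑' i, f i ^ p) ^ (1 / p) + (∑' i, g i ^ p) ^ (1 / p) := by
  let _ : MeasurableSpace ι := ⊤
  have h := ENNReal.lintegral_Lp_add_le (μ := MeasureTheory.Measure.count) (f := f) (g := g)
    (measurable_from_top.aemeasurable) (measurable_from_top.aemeasurable) hp
  simpa only [MeasureTheory.lintegral_count, Pi.add_apply] using h

/-- Hölder's inequality for three families and weights adding up to `1`. -/
lemma holder_tsum_three {ι : Type*} (f g h : ι → ENNReal) {a b c : ℝ} (ha : 0 ≤ a) (hb : 0 ≤ b)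
    (hc : 0 ≤ c) (habc : a + b + c = 1) :
    ∑' i, f i ^ a * g i ^ b * h i ^ c ≤ (∑' i, f i) ^ a * (∑' i, g i) ^ b * (∑' i, h i) ^ c := by
  let _ : MeasurableSpace ι := ⊤
  have H := ENNReal.lintegral_prod_norm_pow_le (μ := MeasureTheory.Measure.count)
    (Finset.univ : Finset (Fin 3)) (f := ![f, g, h]) (p := ![a, b, c])
    (fun i _ => measurable_from_top.aemeasurable)
    (by simpa [Fin.sum_univ_three] using habc)
    (by intro i _; fin_cases i <;> simpa)
  simpa [Fin.prod_univ_three, MeasureTheory.lintegral_count] using H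

/-- Young's inequality for a kernel `K` whose `(d+1)/2`-th powers have row and column sums at most
`G`: it maps `y^d`, with `y ∈ ℓ^{d+1}`, into `ℓ^{d+1}`. -/
lemma young_tsum {ι : Type*} (d : ℕ) (hd : 1 ≤ d) (K : ι → ι → ENNReal) (y : ι → ENNReal)
    (G : ENNReal)
    (hrow : ∀ i, ∑' j, K i j ^ (((d : ℝ) + 1) / 2) ≤ G)
    (hcol : ∀ j, ∑' i, K i j ^ (((d : ℝ) + 1) / 2) ≤ G) :
    (∑' i, (∑' j, K i j * y j ^ d) ^ ((d : ℝ) + 1)) ^ (1 / ((d : ℝ) + 1)) ≤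
      G ^ (1 / (((d : ℝ) + 1) / 2)) * ((∑' j, y j ^ ((d : ℝ) + 1)) ^ (1 / ((d : ℝ) + 1))) ^ d := by
  set r : ℝ := (d : ℝ) + 1 with hr
  have hd' : (1 : ℝ) ≤ d := by exact_mod_cast hd
  have hr0 : 0 < r := by linarith
  set X : ENNReal := ∑' j, y j ^ r with hX
  -- Each term is split with weights `1/r, 1/r, (d-1)/r` on `K^(r/2) y^r`, `K^(r/2)`, `y^r`.
  have hterm : ∀ i j, K i j * y j ^ d =
      (K i j ^ (r / 2) * y j ^ r) ^ (1 / r) * (K i j ^ (r / 2)) ^ (1 / r) *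
        (y j ^ r) ^ (((d : ℝ) - 1) / r) := by
    intro i j
    rw [ENNReal.mul_rpow_of_nonneg _ _ (by positivity), ← ENNReal.rpow_mul, ← ENNReal.rpow_mul,
      ← ENNReal.rpow_mul, show r / 2 * (1 / r) = 1 / 2 by field_simp,
      show r * (1 / r) = 1 by field_simp, show r * (((d : ℝ) - 1) / r) = (d : ℝ) - 1 by field_simp]
    calc K i j * y j ^ d = K i j ^ ((1 / 2 : ℝ) + 1 / 2) * y j ^ (1 + ((d : ℝ) - 1)) := by
          norm_num
      _ = K i j ^ (1 / 2 : ℝ) * K i j ^ (1 / 2 : ℝ) * (y j ^ (1 : ℝ) * y j ^ ((d : ℝ) - 1)) := by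
          rw [ENNReal.rpow_add_of_nonneg _ _ (by norm_num) (by norm_num),
            ENNReal.rpow_add_of_nonneg _ _ (by norm_num) (by linarith)]
      _ = _ := by ring
  have hrowbd : ∀ i, (∑' j, K i j * y j ^ d) ^ r ≤
      (∑' j, K i j ^ (r / 2) * y j ^ r) * (G * X ^ ((d : ℝ) - 1)) := by
    intro i
    have h1 : ∑' j, K i j * y j ^ d ≤ (∑' j, K i j ^ (r / 2) * y j ^ r) ^ (1 / r) *
        (∑' j, K i j ^ (r / 2)) ^ (1 / r) * X ^ (((d : ℝ) - 1) / r) := by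
      rw [tsum_congr (hterm i)]
      exact holder_tsum_three _ _ _ (by positivity) (by positivity)
        (div_nonneg (by linarith) hr0.le) (by rw [hr]; field_simp; ring)
    calc _ ≤ _ := ENNReal.rpow_le_rpow h1 hr0.le
      _ = (∑' j, K i j ^ (r / 2) * y j ^ r) *
          ((∑' j, K i j ^ (r / 2)) * X ^ ((d : ℝ) - 1)) := by
          rw [ENNReal.mul_rpow_of_nonneg _ _ hr0.le, ENNReal.mul_rpow_of_nonneg _ _ hr0.le,
            ← ENNReal.rpow_mul, ← ENNReal.rpow_mul, ← ENNReal.rpow_mul,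
            show 1 / r * r = 1 by field_simp,
            show ((d : ℝ) - 1) / r * r = (d : ℝ) - 1 by field_simp,
            ENNReal.rpow_one, ENNReal.rpow_one, mul_assoc]
      _ ≤ _ := by gcongr; exact hrow i
  have hswap : ∑' i, ∑' j, K i j ^ (r / 2) * y j ^ r ≤ G * X := by
    rw [ENNReal.tsum_comm, hX, ← ENNReal.tsum_mul_left]
    refine ENNReal.tsum_le_tsum fun j => ?_
    rw [ENNReal.tsum_mul_right]
    gcongr
    exact hcol j
  have htot : ∑' i, (∑' j, K i j * y j ^ d) ^ r ≤ G ^ (2 : ℝ) * X ^ (d : ℝ) := by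
    calc _ ≤ ∑' i, (∑' j, K i j ^ (r / 2) * y j ^ r) * (G * X ^ ((d : ℝ) - 1)) :=
          ENNReal.tsum_le_tsum hrowbd
      _ ≤ G * X * (G * X ^ ((d : ℝ) - 1)) := by rw [ENNReal.tsum_mul_right]; gcongr
      _ = (G * G) * (X ^ (1 : ℝ) * X ^ ((d : ℝ) - 1)) := by rw [ENNReal.rpow_one]; ring
      _ = _ := by
          rw [← ENNReal.rpow_add_of_nonneg _ _ (by norm_num) (by linarith), ENNReal.rpow_two, sq]
          norm_num
  calc _ ≤ (G ^ (2 : ℝ) * X ^ (d : ℝ)) ^ (1 / r) := ENNReal.rpow_le_rpow htot (by positivity)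
    _ = _ := by
      rw [ENNReal.mul_rpow_of_nonneg _ _ (by positivity), ← ENNReal.rpow_natCast,
        ← ENNReal.rpow_mul, ← ENNReal.rpow_mul, ← ENNReal.rpow_mul]
      congr 2
      · field_simp
      · ring

lemma ofReal_lpNorm {ι : Type*} {f : ι → ℝ} {p : ℝ} (hp : 0 < p) (hf : ∀ i, 0 ≤ f i)
    (hs : Summable fun i => |f i| ^ p) :
    ENNReal.ofReal ((∑' i, |f i| ^ p) ^ (1 / p)) =
      (∑' i, ENNReal.ofReal (f i) ^ p) ^ (1 / p) := by
  have h0 : ∀ i, 0 ≤ |f i| ^ p := fun i => by positivity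
  rw [← ENNReal.ofReal_rpow_of_nonneg (tsum_nonneg h0) (by positivity),
    ENNReal.ofReal_tsum_of_nonneg h0 hs]
  congr 1
  refine tsum_congr fun i => ?_
  rw [abs_of_nonneg (hf i), ENNReal.ofReal_rpow_of_nonneg (hf i) hp.le]

lemma summable_and_lpNorm_le {ι : Type*} {f : ι → ℝ} {p ε : ℝ} (hp : 0 < p) (hε : 0 ≤ ε)
    (hf : ∀ i, 0 ≤ f i)
    (h : (∑' i, ENNReal.ofReal (f i) ^ p) ^ (1 / p) ≤ ENNReal.ofReal ε) :
    (Summable fun i => |f i| ^ p) ∧ (∑' i, |f i| ^ p) ^ (1 / p) ≤ ε := by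
  have hs : Summable fun i => |f i| ^ p := by
    have hne : ∑' i, ENNReal.ofReal (f i) ^ p ≠ ⊤ := by
      intro htop
      rw [htop, ENNReal.top_rpow_of_pos (by positivity)] at h
      exact ENNReal.ofReal_ne_top (top_le_iff.mp h)
    refine (ENNReal.summable_toReal hne).congr fun i => ?_
    rw [ENNReal.ofReal_rpow_of_nonneg (hf i) hp.le,
      ENNReal.toReal_ofReal (Real.rpow_nonneg (hf i) _), abs_of_nonneg (hf i)]
  refine ⟨hs, ?_⟩
  rw [← ofReal_lpNorm hp hf hs] at h
  exact (ENNReal.ofReal_le_ofReal_iff hε).mp h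

/-- No summability is needed: a divergent real sum has the value `0`. -/
lemma ofReal_tsum_le {ι : Type*} {f : ι → ℝ} (hf : ∀ i, 0 ≤ f i) :
    ENNReal.ofReal (∑' i, f i) ≤ ∑' i, ENNReal.ofReal (f i) := by
  by_cases hs : Summable f
  · exact (ENNReal.ofReal_tsum_of_nonneg hf hs).le
  · simp [tsum_eq_zero_of_not_summable hs]

/-- Proposition 2.8, part 1: invariance of the ε-ball under `T`.
With `γ := ‖Q‖_{(d+1)/2,ℤ^k}` and `δ := ‖Q‖_{d+1,ℤ^k∖{0}}` finite, if `ε > 0` satisfies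
`δ + γ ε^d ≤ ε`, then `T` maps `B_ε(0) ∩ D` into itself. -/
theorem stmt2 (k d : ℕ) (hk : 1 ≤ k) (hd : 2 ≤ d)
    (Q : ZkL k → ℝ) (hQpos : ∀ j, 0 < Q j) (hQ0 : Q 0 = 1)
    (hsum1 : Summable fun j : ZkL k => |Q j| ^ (((d : ℝ) + 1) / 2))
    (hsum2 : Summable fun j : ZkP k => |Q j.1| ^ ((d : ℝ) + 1))
    (ε : ℝ) (hε : 0 < ε)
    (hball : del k d Q + gam k d Q * ε ^ d ≤ ε)
    (x : ZkP k → ℝ) (hx : memD k d x) (hxb : norm0 k ((d : ℝ) + 1) x ≤ ε) :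
    memD k d (fun i : ZkP k => opT k d Q x i.1) ∧
    norm0 k ((d : ℝ) + 1) (fun i : ZkP k => opT k d Q x i.1) ≤ ε := by
  obtain ⟨hxs, hx0⟩ := hx
  have hr0 : (0 : ℝ) < (d : ℝ) + 1 := by positivity
  have hnum : ∀ i : ZkL k, ∀ j : ZkP k, 0 ≤ Q (i - j.1) * x j ^ d := fun i j =>
    mul_nonneg (hQpos _).le (pow_nonneg (hx0 j) d)
  have hden : 1 ≤ 1 + ∑' j : ZkP k, Q j.1 * x j ^ d :=
    le_add_of_nonneg_right
      (tsum_nonneg fun j => mul_nonneg (hQpos _).le (pow_nonneg (hx0 j) d))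
  have hnum' : ∀ i : ZkL k, 0 ≤ Q i + ∑' j : ZkP k, Q (i - j.1) * x j ^ d := fun i =>
    add_nonneg (hQpos i).le (tsum_nonneg (hnum i))
  have hT0 : ∀ i : ZkP k, 0 ≤ opT k d Q x i.1 := fun i =>
    div_nonneg (hnum' i.1) (zero_le_one.trans hden)
  have hTle : ∀ i : ZkP k, ENNReal.ofReal (opT k d Q x i.1) ≤ ENNReal.ofReal (Q i.1) +
      ∑' j : ZkP k, ENNReal.ofReal (Q (i.1 - j.1)) * ENNReal.ofReal (x j) ^ d := by
    intro i
    refine (ENNReal.ofReal_le_ofReal (div_le_self (hnum' i.1) hden)).trans ?_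
    rw [ENNReal.ofReal_add (hQpos _).le (tsum_nonneg (hnum i.1))]
    refine add_le_add le_rfl ((ofReal_tsum_le (hnum i.1)).trans_eq (tsum_congr fun j => ?_))
    rw [ENNReal.ofReal_mul (hQpos _).le, ENNReal.ofReal_pow (hx0 j)]
  have hδ : ENNReal.ofReal (del k d Q) = _ :=
    ofReal_lpNorm (f := fun j : ZkP k => Q j.1) hr0 (fun j => (hQpos _).le) hsum2
  have hγ : ENNReal.ofReal (gam k d Q) = _ :=
    ofReal_lpNorm (f := Q) (half_pos hr0) (fun j => (hQpos _).le) hsum1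
  have hX : ENNReal.ofReal (norm0 k ((d : ℝ) + 1) x) = _ := ofReal_lpNorm hr0 hx0 hxs
  have hδ0 : 0 ≤ del k d Q := Real.rpow_nonneg (tsum_nonneg fun j => by positivity) _
  have hγ0 : 0 ≤ gam k d Q := Real.rpow_nonneg (tsum_nonneg fun j => by positivity) _
  have hyoung := young_tsum d (by omega)
    (fun i j : ZkP k => ENNReal.ofReal (Q (i.1 - j.1))) (fun j => ENNReal.ofReal (x j))
    (∑' j : ZkL k, ENNReal.ofReal (Q j) ^ (((d : ℝ) + 1) / 2))
    (fun i => ENNReal.tsum_comp_le_tsum_of_injective (f := fun j : ZkP k => i.1 - j.1)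
      (fun a b h => Subtype.ext (sub_right_injective h))
      (fun j : ZkL k => ENNReal.ofReal (Q j) ^ (((d : ℝ) + 1) / 2)))
    (fun j => ENNReal.tsum_comp_le_tsum_of_injective (f := fun i : ZkP k => i.1 - j.1)
      (fun a b h => Subtype.ext (sub_left_injective h))
      (fun j : ZkL k => ENNReal.ofReal (Q j) ^ (((d : ℝ) + 1) / 2)))
  rw [← hγ, ← hX] at hyoung
  have key : (∑' i : ZkP k, ENNReal.ofReal (opT k d Q x i.1) ^ ((d : ℝ) + 1)) ^
      (1 / ((d : ℝ) + 1)) ≤ ENNReal.ofReal ε := by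
    calc _ ≤ (∑' i : ZkP k, (ENNReal.ofReal (Q i.1) +
            ∑' j : ZkP k, ENNReal.ofReal (Q (i.1 - j.1)) * ENNReal.ofReal (x j) ^ d) ^
              ((d : ℝ) + 1)) ^ (1 / ((d : ℝ) + 1)) :=
          ENNReal.rpow_le_rpow (ENNReal.tsum_le_tsum fun i =>
            ENNReal.rpow_le_rpow (hTle i) hr0.le) (by positivity)
      _ ≤ _ := minkowski_tsum _ _ (le_add_of_nonneg_left d.cast_nonneg)
      _ ≤ ENNReal.ofReal (del k d Q) + ENNReal.ofReal (gam k d Q) * ENNReal.ofReal ε ^ d := by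
          rw [hδ]
          refine add_le_add le_rfl (hyoung.trans ?_)
          gcongr
      _ = ENNReal.ofReal (del k d Q + gam k d Q * ε ^ d) := by
          rw [ENNReal.ofReal_add hδ0 (by positivity), ENNReal.ofReal_mul hγ0,
            ENNReal.ofReal_pow hε.le]
      _ ≤ _ := ENNReal.ofReal_le_ofReal hball
  have hfin := summable_and_lpNorm_le hr0 hε.le hT0 key
  exact ⟨⟨hfin.1, hT0⟩, hfin.2⟩
end
end

section
/- Existence and uniqueness of a fixed point of T in the good-set regime (core of Theorem 2.3): Set γ := ‖Q‖_{(d+1)/2,ℤ^k} and δ := ‖Q‖_{d+1,ℤ^k∖{0}}. Suppose ε > 0 satisfies both δ + γ ε^d ≤ ε and 2dγ ε^{d−1} + 2dδ ε^d < 1. Then T has a unique fixed point x in the set {x ∈ D : ‖x‖_{d+1,ℤ^k∖{0}} ≤ ε}. -/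
/-!
The map `x ↦ T x` is a contraction of the nonnegative part of the closed `ε`-ball of
`ℓ^{d+1}(ℤ^k ∖ {0})`, a complete metric space, so Banach's fixed point theorem applies.

The estimates come from three inequalities. Young's convolution inequality with exponents
`(d+1)/2`, `(d+1)/d`, `d+1` (`young`) bounds the numerator: `‖Q * z‖_{d+1} ≤ γ ‖z‖_{(d+1)/d}`.
Hölder's inequality (`pairing`) bounds the sum in the denominator by `δ ‖z‖_{(d+1)/d}`. Finally
`‖x^d - y^d‖_{(d+1)/d} ≤ 2 d ε^{d-1} ‖x - y‖_{d+1}` on the ball (`LpBd.pow_sub_pow`). As the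
denominator of `T` is at least `1`, the norm of `T x` is at most `δ + γ ε^d ≤ ε` (`opT_ball`), and
`T` has Lipschitz constant at most `2dγ ε^{d-1} + 2dδ ε^d < 1` (`opT_sub`).

Young's inequality is proved in `[0, ∞]` from the three-factor Hölder inequality on each row of the
convolution, followed by an exchange of the order of summation.
-/

open scoped BigOperators
open Filter Topology

noncomputable section

/-! ### Norm bounds for nonnegative functions -/

/-- `LpBd p f M` says that `f` is a nonnegative function in `ℓ^p` with `‖f‖_p ≤ M`, for a
nonnegative bound `M`; the norm inequality is stated as `∑ f^p ≤ M^p`. -/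
structure LpBd {ι : Type*} (p : ℝ) (f : ι → ℝ) (M : ℝ) : Prop where
  bound_nonneg : 0 ≤ M
  nonneg : ∀ i, 0 ≤ f i
  summable : Summable fun i => f i ^ p
  tsum_le : ∑' i, f i ^ p ≤ M ^ p

namespace LpBd

variable {ι : Type*}

lemma norm_le {p : ℝ} {f : ι → ℝ} {M : ℝ} (hp : 0 < p) (h : LpBd p f M) :
    (∑' i, f i ^ p) ^ (1 / p) ≤ M := by
  have h1 := Real.rpow_le_rpow (tsum_nonneg fun i => Real.rpow_nonneg (h.nonneg i) p) h.tsum_le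
    (by positivity : 0 ≤ 1 / p)
  rwa [← Real.rpow_mul h.bound_nonneg, mul_one_div_cancel hp.ne', Real.rpow_one] at h1

lemma of_norm_le {p : ℝ} {f : ι → ℝ} {M : ℝ} (hp : 0 < p) (hf : ∀ i, 0 ≤ f i)
    (hs : Summable fun i => f i ^ p) (h : (∑' i, f i ^ p) ^ (1 / p) ≤ M) : LpBd p f M := by
  have h0 : 0 ≤ ∑' i, f i ^ p := tsum_nonneg fun i => Real.rpow_nonneg (hf i) p
  have h1 := Real.rpow_le_rpow (Real.rpow_nonneg h0 _) h hp.le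
  rw [← Real.rpow_mul h0, one_div_mul_cancel hp.ne', Real.rpow_one] at h1
  exact ⟨(Real.rpow_nonneg h0 _).trans h, hf, hs, h1⟩

lemma mono {p : ℝ} {f g : ι → ℝ} {M N : ℝ} (hp : 0 < p) (h : LpBd p f M)
    (hg : ∀ i, 0 ≤ g i) (hgf : ∀ i, g i ≤ f i) (hMN : M ≤ N) : LpBd p g N := by
  have hle : ∀ i, g i ^ p ≤ f i ^ p := fun i => Real.rpow_le_rpow (hg i) (hgf i) hp.le
  have hs : Summable fun i => g i ^ p :=
    Summable.of_nonneg_of_le (fun i => Real.rpow_nonneg (hg i) p) hle h.summable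
  exact ⟨h.bound_nonneg.trans hMN, hg, hs, (hs.tsum_le_tsum hle h.summable).trans
    (h.tsum_le.trans (Real.rpow_le_rpow h.bound_nonneg hMN hp.le))⟩

/-- Minkowski's inequality. -/
lemma add {p : ℝ} {f g : ι → ℝ} {M N : ℝ} (hp : 1 ≤ p) (hf : LpBd p f M) (hg : LpBd p g N) :
    LpBd p (fun i => f i + g i) (M + N) := by
  have hp0 : 0 < p := by linarith
  obtain ⟨h1, h2⟩ :=
    Real.Lp_add_le_tsum_of_nonneg hp hf.nonneg hg.nonneg hf.summable hg.summable
  exact of_norm_le hp0 (fun i => add_nonneg (hf.nonneg i) (hg.nonneg i)) h1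
    (h2.trans (add_le_add (hf.norm_le hp0) (hg.norm_le hp0)))

/-- Hölder's inequality. -/
lemma mul {p q r : ℝ} {f g : ι → ℝ} {M N : ℝ} (hpqr : p.HolderTriple q r)
    (hf : LpBd p f M) (hg : LpBd q g N) : LpBd r (fun i => f i * g i) (M * N) := by
  have h1 := Real.summable_Lr_of_Lp_Lq_of_nonneg hpqr hf.nonneg hg.nonneg hf.summable hg.summable
  have h2 := Real.Lr_le_Lp_mul_Lq_tsum_of_nonneg hpqr hf.nonneg hg.nonneg hf.summable hg.summable
  exact of_norm_le hpqr.pos' (fun i => mul_nonneg (hf.nonneg i) (hg.nonneg i)) h1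
    (h2.trans (mul_le_mul (hf.norm_le hpqr.left_pos) (hg.norm_le hpqr.right_pos)
      (Real.rpow_nonneg (tsum_nonneg fun i => Real.rpow_nonneg (hg.nonneg i) q) _)
      hf.bound_nonneg))

lemma const_mul {p : ℝ} {f : ι → ℝ} {M c : ℝ} (hc : 0 ≤ c) (h : LpBd p f M) :
    LpBd p (fun i => c * f i) (c * M) := by
  have he : (fun i => (c * f i) ^ p) = fun i => c ^ p * f i ^ p :=
    funext fun i => Real.mul_rpow hc (h.nonneg i)
  refine ⟨mul_nonneg hc h.bound_nonneg, fun i => mul_nonneg hc (h.nonneg i), ?_, ?_⟩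
  · rw [he]; exact h.summable.mul_left _
  · rw [he, tsum_mul_left, Real.mul_rpow hc h.bound_nonneg]
    exact mul_le_mul_of_nonneg_left h.tsum_le (Real.rpow_nonneg hc p)

lemma pow {p : ℝ} {f : ι → ℝ} {M : ℝ} {n : ℕ} (hn : n ≠ 0) (h : LpBd p f M) :
    LpBd (p / n) (fun i => f i ^ n) (M ^ n) := by
  have key : ∀ t : ℝ, 0 ≤ t → (t ^ n) ^ (p / n) = t ^ p := fun t ht => by
    rw [← Real.rpow_natCast, ← Real.rpow_mul ht]
    congr 1
    field_simp
  have he : (fun i => (f i ^ n) ^ (p / n)) = fun i => f i ^ p :=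
    funext fun i => key _ (h.nonneg i)
  refine ⟨pow_nonneg h.bound_nonneg n, fun i => pow_nonneg (h.nonneg i) n, ?_, ?_⟩
  · rw [he]; exact h.summable
  · rw [he, key _ h.bound_nonneg]; exact h.tsum_le

/-- The power map is locally Lipschitz from `ℓ^{d+1}` to `ℓ^{(d+1)/d}`: combine
`|s^d - t^d| ≤ d |s - t| (s^{d-1} + t^{d-1})` with Hölder's and Minkowski's inequalities. -/
lemma pow_sub_pow {d : ℕ} (hd : 2 ≤ d) {x y : ι → ℝ} {ε N : ℝ}
    (hx : LpBd ((d : ℝ) + 1) x ε) (hy : LpBd ((d : ℝ) + 1) y ε)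
    (hxy : LpBd ((d : ℝ) + 1) (fun i => |x i - y i|) N) :
    LpBd (((d : ℝ) + 1) / d) (fun i => |x i ^ d - y i ^ d|) (2 * d * ε ^ (d - 1) * N) := by
  have hd' : (2 : ℝ) ≤ d := by exact_mod_cast hd
  have hcast : ((d - 1 : ℕ) : ℝ) = d - 1 := by push_cast [show 1 ≤ d by omega]; ring
  have hpos : (0 : ℝ) < ((d - 1 : ℕ) : ℝ) := by rw [hcast]; linarith
  have hp : (1 : ℝ) ≤ ((d : ℝ) + 1) / ((d - 1 : ℕ) : ℝ) := by
    rw [le_div_iff₀ hpos, hcast]; linarith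
  have hsum := add hp (hx.pow (n := d - 1) (by omega)) (hy.pow (n := d - 1) (by omega))
  have htri : (((d : ℝ) + 1) / ((d - 1 : ℕ) : ℝ)).HolderTriple ((d : ℝ) + 1)
      (((d : ℝ) + 1) / d) := by
    refine ⟨?_, by linarith, by linarith⟩
    rw [hcast]
    have : (d : ℝ) - 1 ≠ 0 := by linarith
    field_simp
    ring
  refine ((hsum.mul htri hxy).const_mul (Nat.cast_nonneg d)).mono (by positivity)
    (fun i => abs_nonneg _) (fun i => ?_) (le_of_eq (by ring))
  refine (abs_pow_sub_pow_le (x i) (y i) d).trans ?_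
  have hm : max |x i| |y i| ^ (d - 1) ≤ x i ^ (d - 1) + y i ^ (d - 1) := by
    rw [abs_of_nonneg (hx.nonneg i), abs_of_nonneg (hy.nonneg i)]
    rcases max_choice (x i) (y i) with h | h <;> rw [h]
    · linarith [pow_nonneg (hy.nonneg i) (d - 1)]
    · linarith [pow_nonneg (hx.nonneg i) (d - 1)]
  calc |x i - y i| * d * max |x i| |y i| ^ (d - 1)
      ≤ |x i - y i| * d * (x i ^ (d - 1) + y i ^ (d - 1)) := by gcongr
    _ = _ := by ring

end LpBd

/-! ### Young's convolution inequality -/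

/-- Three-factor Hölder inequality for one row of a convolution, applied to
`a^{2/(d+1)} b^{d/(d+1)} = (ab)^{1/(d+1)} a^{1/(d+1)} b^{(d-1)/(d+1)}`. -/
lemma ennreal_row {ι : Type*} [Countable ι] {d : ℕ} (hd : 2 ≤ d) (a b : ι → ENNReal) :
    (∑' j, a j ^ (2 / ((d : ℝ) + 1)) * b j ^ ((d : ℝ) / (d + 1))) ^ ((d : ℝ) + 1) ≤
      (∑' j, a j * b j) * (∑' j, a j) * (∑' j, b j) ^ ((d : ℝ) - 1) := by
  have hd' : (2 : ℝ) ≤ d := by exact_mod_cast hd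
  have hd1 : (0 : ℝ) < (d : ℝ) + 1 := by linarith
  let _ : MeasurableSpace ι := ⊤
  have _ : MeasurableSingletonClass ι := ⟨fun _ => trivial⟩
  have h := ENNReal.lintegral_prod_norm_pow_le (μ := MeasureTheory.Measure.count (α := ι))
    (Finset.univ : Finset (Fin 3)) (f := ![fun j => a j * b j, a, b])
    (fun i _ => (measurable_from_top).aemeasurable)
    (p := ![1 / ((d : ℝ) + 1), 1 / ((d : ℝ) + 1), ((d : ℝ) - 1) / (d + 1)])
    (by simp [Fin.sum_univ_three]; field_simp; ring)
    (by
      intro i _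
      fin_cases i
      · simp; positivity
      · simp; positivity
      · simp; exact div_nonneg (by linarith) hd1.le)
  simp only [Fin.prod_univ_three, MeasureTheory.lintegral_count, Matrix.cons_val_zero,
    Matrix.cons_val_one, Matrix.cons_val] at h
  have e : ∀ j, (a j * b j) ^ (1 / ((d : ℝ) + 1)) * a j ^ (1 / ((d : ℝ) + 1)) *
      b j ^ (((d : ℝ) - 1) / (d + 1)) =
      a j ^ (2 / ((d : ℝ) + 1)) * b j ^ ((d : ℝ) / (d + 1)) := fun j => by
    rw [ENNReal.mul_rpow_of_nonneg _ _ (by positivity),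
      show (2 : ℝ) / (d + 1) = 1 / (d + 1) + 1 / (d + 1) by ring,
      show (d : ℝ) / (d + 1) = 1 / (d + 1) + (d - 1) / (d + 1) by ring,
      ENNReal.rpow_add_of_nonneg _ _ (by positivity) (by positivity),
      ENNReal.rpow_add_of_nonneg _ _ (by positivity) (div_nonneg (by linarith) hd1.le)]
    ring
  simp only [e] at h
  refine (ENNReal.rpow_le_rpow h hd1.le).trans (le_of_eq ?_)
  rw [ENNReal.mul_rpow_of_nonneg _ _ hd1.le, ENNReal.mul_rpow_of_nonneg _ _ hd1.le,
    ← ENNReal.rpow_mul, ← ENNReal.rpow_mul, ← ENNReal.rpow_mul, one_div_mul_cancel hd1.ne',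
    div_mul_cancel₀ _ hd1.ne', ENNReal.rpow_one, ENNReal.rpow_one]

/-- Young's convolution inequality in `[0, ∞]`, for `a = Q^{(d+1)/2}` and `b = z^{(d+1)/d}`. -/
lemma ennreal_young {k d : ℕ} (hd : 2 ≤ d) (a : ZkL k → ENNReal) (b : ZkP k → ENNReal) :
    ∑' i : ZkP k, (∑' j : ZkP k, a (i.1 - j.1) ^ (2 / ((d : ℝ) + 1)) *
        b j ^ ((d : ℝ) / (d + 1))) ^ ((d : ℝ) + 1) ≤
      (∑' j, a j) ^ (2 : ℝ) * (∑' j, b j) ^ (d : ℝ) := by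
  have hd' : (2 : ℝ) ≤ d := by exact_mod_cast hd
  -- sums of translates and reflections of `a` over punctured lattices
  have hrow : ∀ i : ZkL k, ∑' j : ZkP k, a (i - j.1) ≤ ∑' j, a j := fun i =>
    ENNReal.tsum_comp_le_tsum_of_injective
      (f := fun j : ZkP k => i - j.1)
      (fun j j' h => Subtype.ext (sub_right_injective h)) a
  have hcol : ∀ j : ZkL k, ∑' i : ZkP k, a (i.1 - j) ≤ ∑' j, a j := fun j =>
    ENNReal.tsum_comp_le_tsum_of_injective
      (f := fun i : ZkP k => i.1 - j)
      (fun i i' h => Subtype.ext (sub_left_injective h)) a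
  calc _ ≤ ∑' i : ZkP k, (∑' j : ZkP k, a (i.1 - j.1) * b j) * (∑' j, a j) *
            (∑' j, b j) ^ ((d : ℝ) - 1) :=
        ENNReal.tsum_le_tsum fun i =>
          (ennreal_row hd (fun j : ZkP k => a (i.1 - j.1)) b).trans (by gcongr; exact hrow i.1)
    _ = (∑' i : ZkP k, ∑' j : ZkP k, a (i.1 - j.1) * b j) * (∑' j, a j) *
            (∑' j, b j) ^ ((d : ℝ) - 1) := by
        rw [ENNReal.tsum_mul_right, ENNReal.tsum_mul_right]
    _ ≤ ((∑' j, a j) * ∑' j, b j) * (∑' j, a j) * (∑' j, b j) ^ ((d : ℝ) - 1) := by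
        gcongr
        rw [ENNReal.tsum_comm, ← ENNReal.tsum_mul_left]
        refine ENNReal.tsum_le_tsum fun j => ?_
        rw [ENNReal.tsum_mul_right]
        gcongr
        exact hcol j.1
    _ = _ := by
        rw [show (d : ℝ) = 1 + (d - 1) by ring,
          ENNReal.rpow_add_of_nonneg 1 _ (by norm_num) (by linarith), ENNReal.rpow_one,
          ENNReal.rpow_two]
        ring_nf

/-- Young's convolution inequality with exponents `(d+1)/2`, `(d+1)/d` and `d+1`, together with
the absolute convergence of every row of the convolution. -/
lemma young {k d : ℕ} (hd : 2 ≤ d) {Q : ZkL k → ℝ} {z : ZkP k → ℝ} {G M : ℝ}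
    (hQ : LpBd (((d : ℝ) + 1) / 2) Q G) (hz : LpBd (((d : ℝ) + 1) / d) z M) :
    (∀ i : ZkP k, Summable fun j : ZkP k => Q (i.1 - j.1) * z j) ∧
      LpBd ((d : ℝ) + 1) (fun i : ZkP k => ∑' j : ZkP k, Q (i.1 - j.1) * z j) (G * M) := by
  have hd' : (2 : ℝ) ≤ d := by exact_mod_cast hd
  have hd1 : (0 : ℝ) < (d : ℝ) + 1 := by linarith
  have hG := hQ.bound_nonneg
  have hM := hz.bound_nonneg
  have h := ennreal_young hd (fun j => ENNReal.ofReal (Q j ^ (((d : ℝ) + 1) / 2)))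
    (fun j : ZkP k => ENNReal.ofReal (z j ^ (((d : ℝ) + 1) / d)))
  have e1 : ∀ j, ENNReal.ofReal (Q j ^ (((d : ℝ) + 1) / 2)) ^ (2 / ((d : ℝ) + 1)) =
      ENNReal.ofReal (Q j) := fun j => by
    rw [ENNReal.ofReal_rpow_of_nonneg (Real.rpow_nonneg (hQ.nonneg j) _) (by positivity),
      ← Real.rpow_mul (hQ.nonneg j), show ((d : ℝ) + 1) / 2 * (2 / (d + 1)) = 1 by field_simp,
      Real.rpow_one]
  have e2 : ∀ j, ENNReal.ofReal (z j ^ (((d : ℝ) + 1) / d)) ^ ((d : ℝ) / ((d : ℝ) + 1)) =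
      ENNReal.ofReal (z j) := fun j => by
    rw [ENNReal.ofReal_rpow_of_nonneg (Real.rpow_nonneg (hz.nonneg j) _) (by positivity),
      ← Real.rpow_mul (hz.nonneg j), show ((d : ℝ) + 1) / d * (d / (d + 1)) = 1 by field_simp,
      Real.rpow_one]
  simp only [e1, e2] at h
  have hnn : ∀ i j : ZkP k, 0 ≤ Q (i.1 - j.1) * z j := fun i j =>
    mul_nonneg (hQ.nonneg _) (hz.nonneg _)
  have e3 : ∀ i j : ZkP k, ENNReal.ofReal (Q (i.1 - j.1)) * ENNReal.ofReal (z j) =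
      ENNReal.ofReal (Q (i.1 - j.1) * z j) := fun i j =>
    (ENNReal.ofReal_mul (hQ.nonneg _)).symm
  simp only [e3] at h
  have hB : (∑' j, ENNReal.ofReal (Q j ^ (((d : ℝ) + 1) / 2))) ^ (2 : ℝ) *
      (∑' j : ZkP k, ENNReal.ofReal (z j ^ (((d : ℝ) + 1) / d))) ^ (d : ℝ) ≤
      ENNReal.ofReal ((G * M) ^ ((d : ℝ) + 1)) := by
    rw [← ENNReal.ofReal_tsum_of_nonneg (fun j => Real.rpow_nonneg (hQ.nonneg j) _) hQ.summable,
      ← ENNReal.ofReal_tsum_of_nonneg (fun j => Real.rpow_nonneg (hz.nonneg j) _) hz.summable]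
    calc _ ≤ ENNReal.ofReal (G ^ (((d : ℝ) + 1) / 2)) ^ (2 : ℝ) *
          ENNReal.ofReal (M ^ (((d : ℝ) + 1) / d)) ^ (d : ℝ) := by
            gcongr
            · exact hQ.tsum_le
            · exact hz.tsum_le
      _ = _ := by
          rw [ENNReal.ofReal_rpow_of_nonneg (by positivity) (by positivity),
            ENNReal.ofReal_rpow_of_nonneg (by positivity) (by positivity),
            ← Real.rpow_mul hG, ← Real.rpow_mul hM, ← ENNReal.ofReal_mul (by positivity),
            Real.mul_rpow hG hM, div_mul_cancel₀ _ (by norm_num), div_mul_cancel₀ _ (by positivity)]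
  have hle := h.trans hB
  have hfin : ∀ i : ZkP k, ∑' j : ZkP k, ENNReal.ofReal (Q (i.1 - j.1) * z j) ≠ ⊤ := by
    intro i hi
    have := (ENNReal.le_tsum i).trans hle
    rw [hi, ENNReal.top_rpow_of_pos hd1] at this
    exact ENNReal.ofReal_ne_top (top_le_iff.mp this)
  have hsum : ∀ i : ZkP k, Summable fun j : ZkP k => Q (i.1 - j.1) * z j := fun i => by
    have := ENNReal.summable_toReal (hfin i)
    simpa only [ENNReal.toReal_ofReal (hnn i _)] using this
  have hc : ∀ i : ZkP k, 0 ≤ ∑' j : ZkP k, Q (i.1 - j.1) * z j := fun i => tsum_nonneg (hnn i)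
  have e4 : ∀ i : ZkP k, (∑' j : ZkP k, ENNReal.ofReal (Q (i.1 - j.1) * z j)) ^ ((d : ℝ) + 1) =
      ENNReal.ofReal ((∑' j : ZkP k, Q (i.1 - j.1) * z j) ^ ((d : ℝ) + 1)) := fun i => by
    rw [← ENNReal.ofReal_tsum_of_nonneg (hnn i) (hsum i),
      ENNReal.ofReal_rpow_of_nonneg (hc i) hd1.le]
  simp only [e4] at hle
  have hcs : Summable fun i : ZkP k =>
      (∑' j : ZkP k, Q (i.1 - j.1) * z j) ^ ((d : ℝ) + 1) := by
    have := ENNReal.summable_toReal (ne_top_of_le_ne_top ENNReal.ofReal_ne_top hle)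
    simpa only [ENNReal.toReal_ofReal (Real.rpow_nonneg (hc _) _)] using this
  refine ⟨hsum, mul_nonneg hG hM, hc, hcs, ?_⟩
  rw [← ENNReal.ofReal_tsum_of_nonneg (fun i => Real.rpow_nonneg (hc i) _) hcs] at hle
  exact (ENNReal.ofReal_le_ofReal_iff (by positivity)).mp hle


/-! ### Estimates for the operator -/

/-- Hölder's inequality for the sum in the denominator of `opT`. -/
lemma pairing {k d : ℕ} (hd : 2 ≤ d) {Q : ZkL k → ℝ} {z : ZkP k → ℝ} {δ M : ℝ}
    (hQ : LpBd ((d : ℝ) + 1) (fun j : ZkP k => Q j.1) δ) (hz : LpBd (((d : ℝ) + 1) / d) z M) :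
    (Summable fun j : ZkP k => Q j.1 * z j) ∧ ∑' j : ZkP k, Q j.1 * z j ≤ δ * M := by
  have hd' : (2 : ℝ) ≤ d := by exact_mod_cast hd
  have htri : ((d : ℝ) + 1).HolderTriple (((d : ℝ) + 1) / d) 1 :=
    ⟨by field_simp; ring, by positivity, by positivity⟩
  have h := hQ.mul htri hz
  exact ⟨by simpa using h.summable, by simpa using h.tsum_le⟩

section Operator

variable {k d : ℕ} {Q : ZkL k → ℝ} {γ δ ε : ℝ}

/-- `opT` maps the nonnegative part of the `ε`-ball of `ℓ^{d+1}` to itself: the denominator is at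
least `1`, and the numerator is bounded by Young's inequality. -/
lemma opT_ball (hd : 2 ≤ d) (hγ : LpBd (((d : ℝ) + 1) / 2) Q γ)
    (hδ : LpBd ((d : ℝ) + 1) (fun j : ZkP k => Q j.1) δ)
    (hball : δ + γ * ε ^ d ≤ ε) {x : ZkP k → ℝ} (hx : LpBd ((d : ℝ) + 1) x ε) :
    LpBd ((d : ℝ) + 1) (fun i : ZkP k => opT k d Q x i.1) ε := by
  have hd1 : (0 : ℝ) < (d : ℝ) + 1 := by positivity
  have hxd := hx.pow (n := d) (by omega)
  have hden : 0 ≤ ∑' j : ZkP k, Q j.1 * x j ^ d :=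
    tsum_nonneg fun j => mul_nonneg (hγ.nonneg _) (hxd.nonneg j)
  have hnum := hδ.add (by linarith [Nat.cast_nonneg (α := ℝ) d]) (young hd hγ hxd).2
  exact hnum.mono hd1 (fun i => div_nonneg (hnum.nonneg i) (by linarith))
    (fun i => div_le_self (hnum.nonneg i) (by linarith)) hball

/-- The contraction estimate for `opT`. Writing `opT x = F x / G x`, it rests on
`opT x - opT y = ((F x - F y) + opT y * (G y - G x)) / G x` with `G x ≥ 1`, where the two
differences are controlled by Young's and Hölder's inequalities applied to `|x^d - y^d|`. -/
lemma opT_sub (hd : 2 ≤ d) (hγ : LpBd (((d : ℝ) + 1) / 2) Q γ)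
    (hδ : LpBd ((d : ℝ) + 1) (fun j : ZkP k => Q j.1) δ)
    (hball : δ + γ * ε ^ d ≤ ε) {x y : ZkP k → ℝ} {N : ℝ} (hx : LpBd ((d : ℝ) + 1) x ε)
    (hy : LpBd ((d : ℝ) + 1) y ε) (hxy : LpBd ((d : ℝ) + 1) (fun i => |x i - y i|) N) :
    LpBd ((d : ℝ) + 1) (fun i : ZkP k => |opT k d Q x i.1 - opT k d Q y i.1|)
      ((2 * d * γ * ε ^ (d - 1) + 2 * d * δ * ε ^ d) * N) := by
  have hd1 : (0 : ℝ) < (d : ℝ) + 1 := by positivity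
  have hxd := hx.pow (n := d) (by omega)
  have hyd := hy.pow (n := d) (by omega)
  have hz := LpBd.pow_sub_pow hd hx hy hxy
  have hTy := opT_ball hd hγ hδ hball hy
  obtain ⟨hrx, -⟩ := young hd hγ hxd
  obtain ⟨hry, -⟩ := young hd hγ hyd
  obtain ⟨hrz, hCz⟩ := young hd hγ hz
  obtain ⟨hpx, -⟩ := pairing hd hδ hxd
  obtain ⟨hpy, -⟩ := pairing hd hδ hyd
  obtain ⟨hpz, hpzle⟩ := pairing hd hδ hz
  have hE : 0 ≤ ∑' j : ZkP k, Q j.1 * |x j ^ d - y j ^ d| :=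
    tsum_nonneg fun j => mul_nonneg (hγ.nonneg _) (abs_nonneg _)
  have hsum := hCz.add (by linarith [Nat.cast_nonneg (α := ℝ) d]) (hTy.const_mul hE)
  have habs : ∀ (q : ZkP k → ℝ), (∀ j, 0 ≤ q j) → (Summable fun j => q j * x j ^ d) →
      (Summable fun j => q j * y j ^ d) → (Summable fun j => q j * |x j ^ d - y j ^ d|) →
      |∑' j, q j * x j ^ d - ∑' j, q j * y j ^ d| ≤ ∑' j, q j * |x j ^ d - y j ^ d| := by
    intro q hq h1 h2 h3
    rw [← h1.tsum_sub h2]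
    have h4 : ∀ j, ‖q j * x j ^ d - q j * y j ^ d‖ = q j * |x j ^ d - y j ^ d| := fun j => by
      rw [← mul_sub, Real.norm_eq_abs, abs_mul, abs_of_nonneg (hq j)]
    have h5 := norm_tsum_le_tsum_norm (f := fun j => q j * x j ^ d - q j * y j ^ d)
      (by simpa only [h4] using h3)
    simpa only [h4, Real.norm_eq_abs] using h5
  refine hsum.mono hd1 (fun i => abs_nonneg _) (fun i => ?_) ?_
  · have hF := habs (fun j => Q (i.1 - j.1)) (fun j => hγ.nonneg _) (hrx i) (hry i) (hrz i)
    have hG := habs (fun j => Q j.1) (fun j => hγ.nonneg _) hpx hpy hpz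
    have hGx : 0 ≤ ∑' j : ZkP k, Q j.1 * x j ^ d :=
      tsum_nonneg fun j => mul_nonneg (hγ.nonneg _) (hxd.nonneg j)
    have hGy : 0 ≤ ∑' j : ZkP k, Q j.1 * y j ^ d :=
      tsum_nonneg fun j => mul_nonneg (hγ.nonneg _) (hyd.nonneg j)
    have hTi := hTy.nonneg i
    simp only [opT] at hF hG hTi ⊢
    generalize (∑' j : ZkP k, Q (i.1 - j.1) * x j ^ d) = Fx at *
    generalize (∑' j : ZkP k, Q (i.1 - j.1) * y j ^ d) = Fy at *
    generalize (∑' j : ZkP k, Q j.1 * x j ^ d) = Gx at *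
    generalize (∑' j : ZkP k, Q j.1 * y j ^ d) = Gy at *
    generalize (∑' j : ZkP k, Q j.1 * |x j ^ d - y j ^ d|) = E at *
    generalize (∑' j : ZkP k, Q (i.1 - j.1) * |x j ^ d - y j ^ d|) = C at *
    have hid : (Q i.1 + Fx) / (1 + Gx) - (Q i.1 + Fy) / (1 + Gy) =
        ((Fx - Fy) - (Gx - Gy) * ((Q i.1 + Fy) / (1 + Gy))) / (1 + Gx) := by
      have h1 : 1 + Gx ≠ 0 := by linarith
      have h2 : 1 + Gy ≠ 0 := by linarith
      field_simp
      ring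
    rw [hid, abs_div, abs_of_pos (by linarith : 0 < 1 + Gx)]
    refine (div_le_self (abs_nonneg _) (by linarith)).trans ((abs_sub _ _).trans ?_)
    rw [abs_mul, abs_of_nonneg hTi]
    gcongr
  · have hε := hx.bound_nonneg
    have hpow : ε ^ (d - 1) * ε = ε ^ d := by rw [← pow_succ]; congr 1; omega
    calc _ ≤ γ * (2 * d * ε ^ (d - 1) * N) + δ * (2 * d * ε ^ (d - 1) * N) * ε := by gcongr
      _ = _ := by rw [← hpow]; ring

end Operator

/-! ### The fixed point -/

/-- The complete metric space on which `opT` acts: nonnegative elements of `ℓ^{d+1}` of norm at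
most `ε`. -/
def ballD (k d : ℕ) (ε : ℝ) : Set (lp (fun _ : ZkP k => ℝ) (ENNReal.ofReal ((d : ℝ) + 1))) :=
  {x | (∀ i, 0 ≤ x i) ∧ ‖x‖ ≤ ε}

/-- core of Theorem 2.3: existence and uniqueness of a fixed point of `T`.
With `γ := ‖Q‖_{(d+1)/2,ℤ^k}` and `δ := ‖Q‖_{d+1,ℤ^k∖{0}}`, if `ε > 0` satisfies both
`δ + γ ε^d ≤ ε` and `2dγ ε^{d−1} + 2dδ ε^d < 1`, then `T` has a unique fixed point in
`{x ∈ D : ‖x‖_{d+1,ℤ^k∖{0}} ≤ ε}`. -/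
theorem stmt4 (k d : ℕ) (hk : 1 ≤ k) (hd : 2 ≤ d)
    (Q : ZkL k → ℝ) (hQpos : ∀ j, 0 < Q j) (hQ0 : Q 0 = 1)
    (hsum1 : Summable fun j : ZkL k => |Q j| ^ (((d : ℝ) + 1) / 2))
    (hsum2 : Summable fun j : ZkP k => |Q j.1| ^ ((d : ℝ) + 1))
    (ε : ℝ) (hε : 0 < ε)
    (hball : del k d Q + gam k d Q * ε ^ d ≤ ε)
    (hcontr : 2 * d * gam k d Q * ε ^ (d - 1) + 2 * d * del k d Q * ε ^ d < 1) :
    ∃! x : ZkP k → ℝ,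
      (memD k d x ∧ norm0 k ((d : ℝ) + 1) x ≤ ε) ∧
      ∀ i : ZkP k, opT k d Q x i.1 = x i := by
  have hd1 : (0 : ℝ) < (d : ℝ) + 1 := by positivity
  have hp : (ENNReal.ofReal ((d : ℝ) + 1)).toReal = (d : ℝ) + 1 := ENNReal.toReal_ofReal hd1.le
  have hp0 : 0 < (ENNReal.ofReal ((d : ℝ) + 1)).toReal := by rw [hp]; exact hd1
  have : Fact (1 ≤ ENNReal.ofReal ((d : ℝ) + 1)) :=
    ⟨by rw [ENNReal.one_le_ofReal]; linarith [Nat.cast_nonneg (α := ℝ) d]⟩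
  have hQabs : ∀ j, |Q j| = Q j := fun j => abs_of_pos (hQpos j)
  have hγ : LpBd (((d : ℝ) + 1) / 2) Q (gam k d Q) := by
    refine LpBd.of_norm_le (by positivity) (fun j => (hQpos j).le) ?_ ?_
    · simpa only [hQabs] using hsum1
    · simp only [gam, normFull, hQabs, le_refl]
  have hδ : LpBd ((d : ℝ) + 1) (fun j : ZkP k => Q j.1) (del k d Q) := by
    refine LpBd.of_norm_le (by positivity) (fun j => (hQpos j.1).le) ?_ ?_
    · simpa only [hQabs] using hsum2
    · simp only [del, normPunct, hQabs, le_refl]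
  have hnorm : ∀ f : lp (fun _ : ZkP k => ℝ) (ENNReal.ofReal ((d : ℝ) + 1)),
      ‖f‖ = (∑' i, |f i| ^ ((d : ℝ) + 1)) ^ (1 / ((d : ℝ) + 1)) := fun f => by
    rw [lp.norm_eq_tsum_rpow hp0, hp]; rfl
  have hsummable : ∀ f : lp (fun _ : ZkP k => ℝ) (ENNReal.ofReal ((d : ℝ) + 1)),
      Summable fun i => |f i| ^ ((d : ℝ) + 1) := fun f => by
    have := (lp.memℓp f).summable hp0
    rwa [hp] at this
  have hbd : ∀ f : lp (fun _ : ZkP k => ℝ) (ENNReal.ofReal ((d : ℝ) + 1)),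
      LpBd ((d : ℝ) + 1) (fun i => |f i|) ‖f‖ := fun f =>
    LpBd.of_norm_le hd1 (fun i => abs_nonneg _) (hsummable f) (hnorm f).ge
  have hmem : ∀ x : ballD k d ε, LpBd ((d : ℝ) + 1) (x.1 : ZkP k → ℝ) ε := fun x =>
    (hbd x.1).mono hd1 x.2.1 (fun i => le_abs_self _) x.2.2
  -- an `ℓ^{d+1}` function in the sense of `LpBd`, as a point of `ballD`
  have hlift : ∀ x : ZkP k → ℝ, LpBd ((d : ℝ) + 1) x ε →
      ∃ y : ballD k d ε, (y.1 : ZkP k → ℝ) = x := by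
    intro x hx
    have habs : ∀ i, |x i| = x i := fun i => abs_of_nonneg (hx.nonneg i)
    have hxm : Memℓp x (ENNReal.ofReal ((d : ℝ) + 1)) := by
      apply memℓp_gen
      simpa only [hp, Real.norm_eq_abs, habs] using hx.summable
    refine ⟨⟨⟨x, hxm⟩, hx.nonneg, ?_⟩, rfl⟩
    rw [hnorm]
    simpa only [habs] using hx.norm_le hd1
  have hcoord : ∀ i : ZkP k, Continuous
      fun x : lp (fun _ : ZkP k => ℝ) (ENNReal.ofReal ((d : ℝ) + 1)) => x i := fun i =>
    (continuous_apply i).comp (lp.uniformContinuous_coe (E := fun _ : ZkP k => ℝ)).continuous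
  have hclosed : IsClosed (ballD k d ε) := by
    have h1 : IsClosed {x : lp (fun _ : ZkP k => ℝ) (ENNReal.ofReal ((d : ℝ) + 1)) |
        ∀ i, 0 ≤ x i} := by
      simp only [Set.ofPred_forall]
      exact isClosed_iInter fun i => isClosed_le continuous_const (hcoord i)
    exact h1.inter (isClosed_le continuous_norm continuous_const)
  have : CompleteSpace (ballD k d ε) := hclosed.completeSpace_coe
  have : Nonempty (ballD k d ε) := ⟨⟨0, fun i => le_rfl, by rw [norm_zero]; exact hε.le⟩⟩
  choose T hT using fun x : ballD k d ε => hlift _ (opT_ball hd hγ hδ hball (hmem x))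
  set K : ℝ := 2 * d * gam k d Q * ε ^ (d - 1) + 2 * d * del k d Q * ε ^ d with hK
  have hK0 : 0 ≤ K := by
    have := hγ.bound_nonneg
    have := hδ.bound_nonneg
    positivity
  have hcontract : ContractingWith K.toNNReal T := by
    refine ⟨by rw [← NNReal.coe_lt_coe, Real.coe_toNNReal _ hK0]; exact_mod_cast hcontr,
      LipschitzWith.of_dist_le_mul fun x y => ?_⟩
    rw [Real.coe_toNNReal _ hK0, Subtype.dist_eq, Subtype.dist_eq, dist_eq_norm, dist_eq_norm]
    have h1 : LpBd ((d : ℝ) + 1) (fun i => |x.1 i - y.1 i|) ‖x.1 - y.1‖ := hbd (x.1 - y.1)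
    have h2 := (opT_sub hd hγ hδ hball (hmem x) (hmem y) h1).norm_le hd1
    rw [hnorm]
    have h3 : ∀ i, ((T x).1 - (T y).1) i = opT k d Q x.1 i.1 - opT k d Q y.1 i.1 := fun i => by
      rw [lp.coeFn_sub, Pi.sub_apply, hT, hT]
    simpa only [h3] using h2
  have hfix : ∀ x : ballD k d ε,
      Function.IsFixedPt T x ↔ ∀ i : ZkP k, opT k d Q x.1 i.1 = x.1 i := fun x => by
    rw [Function.IsFixedPt, Subtype.ext_iff, lp.ext_iff, hT, funext_iff]
  refine ⟨(ContractingWith.fixedPoint T hcontract).1, ⟨⟨⟨hsummable _, ?_⟩, ?_⟩, ?_⟩, ?_⟩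
  · exact (ContractingWith.fixedPoint T hcontract).2.1
  · rw [norm0, ← hnorm]
    exact (ContractingWith.fixedPoint T hcontract).2.2
  · exact (hfix _).mp hcontract.fixedPoint_isFixedPt
  · rintro x ⟨⟨⟨hxs, hx0⟩, hxε⟩, hxT⟩
    have habs : ∀ i, |x i| = x i := fun i => abs_of_nonneg (hx0 i)
    simp only [norm0, habs] at hxs hxε
    obtain ⟨y, rfl⟩ := hlift x (LpBd.of_norm_le hd1 hx0 hxs hxε)
    rw [hcontract.fixedPoint_unique ((hfix y).mpr hxT)]
end
end
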